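/- Let f ∈ 𝒮(S^m) be a symmetric m-tensor field on ℝⁿ with Schwartz components, let 1 ≤ k ≤ min{n−1, m}, and for each y ≠ 0 let ĝ(y) ∈ S^m(ℝⁿ) and v̂(y) ∈ S^{m−k}(ℝⁿ) be determined by the pointwise decomposition f̂(y) = ĝ(y) + i_{y^{⊗k}} v̂(y), j_{y^{⊗k}} ĝ(y) = 0, where f̂ is the componentwise Fourier transform of f. Then ĝ and v̂ are smooth on ℝⁿ∖{0} and rapidly decaying as |y| → ∞, and for every multi-index α there is a constant C_α such that |D^α ĝ(y)| ≤ C_α |y|^{−|α|} and |D^α v̂(y)| ≤ C_α |y|^{−|α|−k} for all 0 < |y| ≤ 1. -/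

import Mathlib

noncomputable section

open MeasureTheory Filter
open scoped RealInnerProductSpace BigOperators

/-- `ℝⁿ` with the Euclidean structure. -/
abbrev En (n : ℕ) := EuclideanSpace ℝ (Fin n)

/-- A symmetric `m`-tensor on `ℝⁿ` (pointwise): a family of reals indexed by
`(i₁,…,i_m)`, invariant under permutations of the indices. -/
def IsSymTensor {n m : ℕ} (F : (Fin m → Fin n) → ℝ) : Prop :=
  ∀ (π : Equiv.Perm (Fin m)) (i : Fin m → Fin n), F (i ∘ π) = F i

/-- A symmetric `m`-tensor field on `ℝⁿ`. -/
def IsSymField {n m : ℕ} (f : (Fin m → Fin n) → En n → ℝ) : Prop :=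
  ∀ (π : Equiv.Perm (Fin m)) (i : Fin m → Fin n), f (i ∘ π) = f i

/-- All components of the field are Schwartz functions. -/
def IsSchwartzField {n m : ℕ} (f : (Fin m → Fin n) → En n → ℝ) : Prop :=
  ∀ i, ∃ φ : SchwartzMap (En n) ℝ, ⇑φ = f i

/-- Symmetrization `σ` of a tensor: average over all permutations of the indices. -/
def symz {n m : ℕ} {α : Type*} [AddCommMonoid α] [Module ℝ α]
    (F : (Fin m → Fin n) → α) : (Fin m → Fin n) → α :=
  fun i => ((m.factorial : ℝ))⁻¹ • ∑ π : Equiv.Perm (Fin m), F (i ∘ π)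

/-- The `q`-th momentum ray transform
`(J^q f)(x,ξ) = ∫ t^q f_{i₁…i_m}(x+tξ) ξ^{i₁}⋯ξ^{i_m} dt`, as a function on all of
`ℝⁿ × ℝⁿ`; its restriction to `TSⁿ⁻¹ = {|ξ|=1, ⟨x,ξ⟩=0}` is `I^q f`. -/
def momRT {n m : ℕ} (q : ℕ) (f : (Fin m → Fin n) → En n → ℝ) (x ξ : En n) : ℝ :=
  ∫ t : ℝ, t ^ q * ∑ i : Fin m → Fin n, f i (x + t • ξ) * ∏ r, ξ (i r)

/-- Coordinate partial derivative `∂/∂x^j`. -/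
def pd {n : ℕ} (j : Fin n) (u : En n → ℝ) : En n → ℝ :=
  fun x => fderiv ℝ u x (EuclideanSpace.single j 1)

/-- Inner differentiation (symmetrized derivative) `d`. -/
def dsym {n m : ℕ} (u : (Fin m → Fin n) → En n → ℝ) :
    (Fin (m + 1) → Fin n) → En n → ℝ :=
  symz (fun i => pd (i (Fin.last m)) (u (fun s => i s.castSucc)))

/-- Iterated inner differentiation `d^k`. -/
def dpow {n m : ℕ} : (k : ℕ) → ((Fin m → Fin n) → En n → ℝ) →
    (Fin (m + k) → Fin n) → En n → ℝ
  | 0, u => u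
  | k + 1, u => dsym (dpow k u)

/-- Divergence `δ`. -/
def divg {n m : ℕ} (u : (Fin (m + 1) → Fin n) → En n → ℝ) :
    (Fin m → Fin n) → En n → ℝ :=
  fun i x => ∑ j : Fin n, pd j (u (Fin.snoc i j)) x

/-- Iterated divergence `δ^k`. -/
def divpow {n : ℕ} : (k : ℕ) → {p : ℕ} → ((Fin (p + k) → Fin n) → En n → ℝ) →
    (Fin p → Fin n) → En n → ℝ
  | 0, _, u => u
  | k + 1, _, u => divpow k (divg u)

/-- Partial derivative `∂/∂x^j` in the first slot of a function of `(x, ξ)`. -/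
def pdx {n : ℕ} (j : Fin n) (F : En n → En n → ℝ) : En n → En n → ℝ :=
  fun x ξ => fderiv ℝ (fun x' => F x' ξ) x (EuclideanSpace.single j 1)

/-- Partial derivative `∂/∂ξ^j` in the second slot of a function of `(x, ξ)`. -/
def pdxi {n : ℕ} (j : Fin n) (F : En n → En n → ℝ) : En n → En n → ℝ :=
  fun x ξ => fderiv ℝ (fun ξ' => F x ξ') ξ (EuclideanSpace.single j 1)

/-- Iterated `∂x` derivatives along a list of indices. -/
def pdxList {n : ℕ} (l : List (Fin n)) (F : En n → En n → ℝ) : En n → En n → ℝ :=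
  l.foldr pdx F

/-- Iterated `∂ξ` derivatives along a list of indices. -/
def pdxiList {n : ℕ} (l : List (Fin n)) (F : En n → En n → ℝ) : En n → En n → ℝ :=
  l.foldr pdxi F

/-- The John operator `J_{ij} = ∂²/∂x^i∂ξ^j − ∂²/∂x^j∂ξ^i`. -/
def johnOp {n : ℕ} (i j : Fin n) (F : En n → En n → ℝ) : En n → En n → ℝ :=
  fun x ξ => pdx i (pdxi j F) x ξ - pdx j (pdxi i F) x ξ

/-- Iterated John operators `J_{i₁j₁} ⋯ J_{i_r j_r}`. -/
def johnIter {n : ℕ} (l : List (Fin n × Fin n)) (F : En n → En n → ℝ) : En n → En n → ℝ :=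
  l.foldr (fun ij G => johnOp ij.1 ij.2 G) F

/-- Sharafutdinov's Schwartz space `𝒮(TSⁿ⁻¹)`: a function on
`TSⁿ⁻¹ = {(x,ξ) : |ξ|=1, ⟨x,ξ⟩=0}` is Schwartz iff it is the restriction of a
Schwartz function on `ℝⁿ × ℝⁿ`. -/
def IsSchwartzOnTS {n : ℕ} (φ : En n → En n → ℝ) : Prop :=
  ∃ Φ : SchwartzMap (En n × En n) ℝ, ∀ x ξ : En n, ‖ξ‖ = 1 → ⟪x, ξ⟫ = 0 → φ x ξ = Φ (x, ξ)

/-- Symmetric multiplication `i_{x^{⊗k}} : S^m → S^{m+k}`. -/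
def iPowTens {n m k : ℕ} (x : En n) (V : (Fin m → Fin n) → ℝ) :
    (Fin (m + k) → Fin n) → ℝ :=
  symz (fun i => (∏ r : Fin k, x (i (Fin.natAdd m r))) * V (fun s => i (Fin.castAdd k s)))

/-- Convolution (contraction) `j_{x^{⊗k}} : S^{m+k} → S^m`. -/
def jPowTens {n m k : ℕ} (x : En n) (F : (Fin (m + k) → Fin n) → ℝ) :
    (Fin m → Fin n) → ℝ :=
  fun i => ∑ j : Fin k → Fin n, (∏ r, x (j r)) * F (Fin.append i j)

/-- Complex symmetric multiplication `i_{x^{⊗k}}`. -/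
def iPowTensC {n m k : ℕ} (x : En n) (V : (Fin m → Fin n) → ℂ) :
    (Fin (m + k) → Fin n) → ℂ :=
  symz (fun i => (∏ r : Fin k, (x (i (Fin.natAdd m r)) : ℂ)) * V (fun s => i (Fin.castAdd k s)))

/-- Complex convolution `j_{x^{⊗k}}`. -/
def jPowTensC {n m k : ℕ} (x : En n) (F : (Fin (m + k) → Fin n) → ℂ) :
    (Fin m → Fin n) → ℂ :=
  fun i => ∑ j : Fin k → Fin n, (∏ r, (x (j r) : ℂ)) * F (Fin.append i j)

/-- Complex symmetric tensor. -/
def IsSymTensorC {n m : ℕ} (F : (Fin m → Fin n) → ℂ) : Prop :=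
  ∀ (π : Equiv.Perm (Fin m)) (i : Fin m → Fin n), F (i ∘ π) = F i

/-- Complex coordinate partial derivative. -/
def pdC {n : ℕ} (j : Fin n) (u : En n → ℂ) : En n → ℂ :=
  fun x => fderiv ℝ u x (EuclideanSpace.single j 1)

/-- `D_j = −i∂_j` applied along a list of coordinates. -/
def DopList {n : ℕ} (l : List (Fin n)) (u : En n → ℂ) : En n → ℂ :=
  l.foldr (fun j v => fun x => (-Complex.I) * pdC j v x) u

/-- Canonical list of coordinates attached to a multi-index `α`. -/
def mIdxList {n : ℕ} (α : Fin n → ℕ) : List (Fin n) :=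
  (List.finRange n).flatMap (fun j => List.replicate (α j) j)

/-- `D^α = (−i)^{|α|} ∂^α`. -/
def Dpow {n : ℕ} (α : Fin n → ℕ) (u : En n → ℂ) : En n → ℂ :=
  DopList (mIdxList α) u

/-- Euclidean norm of a complex tensor. -/
def tensNormC {n m : ℕ} (F : (Fin m → Fin n) → ℂ) : ℝ :=
  Real.sqrt (∑ i, ‖F i‖ ^ 2)

/-- Fourier transform with the convention `(2π)^{-n/2} ∫ e^{-i⟨x,y⟩} u(x) dx`. -/
def ftr {n : ℕ} (u : En n → ℝ) (y : En n) : ℂ :=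
  (((2 * Real.pi) ^ (-(n : ℝ) / 2) : ℝ) : ℂ) *
    ∫ x : En n, Complex.exp (-Complex.I * (⟪x, y⟫ : ℝ)) * (u x : ℂ)

/-!
On symmetric tensors `i = i_{y^{⊗k}}` has the adjoint `σ j = σ j_{y^{⊗k}}`. Identifying symmetric
tensors with homogeneous polynomials, `i` becomes multiplication by `⟨y, ξ⟩ ^ k`, so it is injective
for `y ≠ 0` and `σ j i` is invertible. Applying `σ j` to the decomposition gives
`v̂ = (σ j i)⁻¹ σ j f̂` and `ĝ = f̂ - i v̂`: both are `f̂` acted on by an operator that is smooth in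
`y ≠ 0` and homogeneous in `y`, of degree `-k` for `v̂` and of degree `0` for `ĝ`. Its derivatives
of order `N` are homogeneous of degree lower by `N`, hence controlled by their maxima on the unit
sphere, and Leibniz' rule with the Schwartz function `f̂` gives all the bounds.
-/

section LeftInverse

variable {𝕜 E X T : Type*} [NontriviallyNormedField 𝕜] [NormedAddCommGroup E] [NormedSpace 𝕜 E]
  [NormedAddCommGroup X] [NormedSpace 𝕜 X] [NormedAddCommGroup T] [NormedSpace 𝕜 T]

theorem inverse_const_smul {c : 𝕜} (hc : c ≠ 0) (f : X →L[𝕜] T) :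
    (c • f).inverse = c⁻¹ • f.inverse := by
  let e : T ≃L[𝕜] T := ContinuousLinearEquiv.smulLeft (Units.mk0 c hc)
  have he : c • f = e ∘L f := rfl
  rw [he, ContinuousLinearMap.inverse_equiv_comp]
  ext v
  exact map_smul f.inverse c⁻¹ v

/-- The left inverse of `A` that vanishes on `ker B`; meaningful when `B ∘L A` is invertible. -/
def leftInverseAlong (A : X →L[𝕜] T) (B : T →L[𝕜] X) : T →L[𝕜] X :=
  (B ∘L A).inverse ∘L B

/-- The projection onto `ker B` along `range A`; meaningful when `B ∘L A` is invertible. -/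
def kerProjAlong (A : X →L[𝕜] T) (B : T →L[𝕜] X) : T →L[𝕜] T :=
  .id 𝕜 T - A ∘L leftInverseAlong A B

theorem leftInverseAlong_apply_add {A : X →L[𝕜] T} {B : T →L[𝕜] X}
    (hBA : (B ∘L A).IsInvertible) {t : T} (ht : B t = 0) (x : X) :
    leftInverseAlong A B (t + A x) = x := by
  have hB : B (t + A x) = (B ∘L A) x := by
    rw [map_add, ht, zero_add, ContinuousLinearMap.comp_apply]
  rw [leftInverseAlong, ContinuousLinearMap.comp_apply, hB, hBA.inverse_apply_self]

theorem kerProjAlong_apply_add {A : X →L[𝕜] T} {B : T →L[𝕜] X}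
    (hBA : (B ∘L A).IsInvertible) {t : T} (ht : B t = 0) (x : X) :
    kerProjAlong A B (t + A x) = t := by
  simp only [kerProjAlong, sub_apply, ContinuousLinearMap.id_apply, ContinuousLinearMap.comp_apply,
    leftInverseAlong_apply_add hBA ht, add_sub_cancel_right]

theorem isInvertible_of_injective [CompleteSpace 𝕜] [FiniteDimensional 𝕜 X] {L : X →L[𝕜] X}
    (hL : Function.Injective L) : L.IsInvertible :=
  ⟨(LinearEquiv.ofInjectiveEndo (L : X →ₗ[𝕜] X) hL).toContinuousLinearEquiv, rfl⟩

theorem contDiffOn_leftInverseAlong [CompleteSpace X] {A : E → X →L[𝕜] T} {B : E → T →L[𝕜] X}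
    {s : Set E} {r : WithTop ℕ∞}
    (hA : ContDiffOn 𝕜 r A s) (hB : ContDiffOn 𝕜 r B s)
    (hBA : ∀ y ∈ s, (B y ∘L A y).IsInvertible) :
    ContDiffOn 𝕜 r (fun y => leftInverseAlong (A y) (B y)) s :=
  have hinv : ContDiffOn 𝕜 r (fun y => (B y ∘L A y).inverse) s := fun y hy =>
    (hBA y hy).contDiffAt_map_inverse.comp_contDiffWithinAt (f := fun y => B y ∘L A y) y
      (hB.clm_comp hA y hy)
  hinv.clm_comp hB

theorem contDiffOn_kerProjAlong [CompleteSpace X] {A : E → X →L[𝕜] T} {B : E → T →L[𝕜] X}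
    {s : Set E} {r : WithTop ℕ∞}
    (hA : ContDiffOn 𝕜 r A s) (hB : ContDiffOn 𝕜 r B s)
    (hBA : ∀ y ∈ s, (B y ∘L A y).IsInvertible) :
    ContDiffOn 𝕜 r (fun y => kerProjAlong (A y) (B y)) s :=
  contDiffOn_const.sub (hA.clm_comp (contDiffOn_leftInverseAlong hA hB hBA))

end LeftInverse

section Homogeneous

variable {E W X Y Z : Type*} [NormedAddCommGroup E] [NormedSpace ℝ E]
  [NormedAddCommGroup W] [NormedSpace ℝ W] [NormedAddCommGroup X] [NormedSpace ℝ X]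
  [NormedAddCommGroup Y] [NormedSpace ℝ Y] [NormedAddCommGroup Z] [NormedSpace ℝ Z]

/-- Positive homogeneity of integer degree `d`. Including `y = 0` costs nothing here: the inverse
of a non-invertible operator is `0` in Mathlib, so inversion preserves the identity there too. -/
def IsPosHomogeneous (d : ℤ) (U : E → W) : Prop :=
  ∀ ⦃c : ℝ⦄, 0 < c → ∀ y, U (c • y) = c ^ d • U y

namespace IsPosHomogeneous

variable {a b d : ℤ}

theorem const (w : W) : IsPosHomogeneous 0 (fun _ : E => w) := fun c _ _ => by
  rw [zpow_zero, one_smul]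

theorem sub {U V : E → W} (hU : IsPosHomogeneous d U) (hV : IsPosHomogeneous d V) :
    IsPosHomogeneous d (fun y => U y - V y) := fun c hc y => by
  simp only [hU hc, hV hc, smul_sub]

theorem clm_comp {A : E → Y →L[ℝ] Z} {B : E → X →L[ℝ] Y} (hA : IsPosHomogeneous a A)
    (hB : IsPosHomogeneous b B) : IsPosHomogeneous (a + b) (fun y => A y ∘L B y) := fun c hc y => by
  simp only [hA hc, hB hc, ContinuousLinearMap.smul_comp, ContinuousLinearMap.comp_smul, smul_smul,
    zpow_add₀ hc.ne', mul_comm]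

theorem clm_inverse {A : E → X →L[ℝ] Y} (hA : IsPosHomogeneous d A) :
    IsPosHomogeneous (-d) (fun y => (A y).inverse) := fun c hc y => by
  simp only [hA hc, inverse_const_smul (zpow_ne_zero d hc.ne'), zpow_neg]

protected theorem fderiv {U : E → W} (hU : IsPosHomogeneous d U) :
    IsPosHomogeneous (d - 1) (fderiv ℝ U) := fun c hc y => by
  have hscale : (fun x => U (c • x)) = c ^ d • U := funext (hU hc)
  have hchain : c • fderiv ℝ U (c • y) = c ^ d • fderiv ℝ U y := by
    rw [← fderiv_comp_smul, hscale, fderiv_const_smul_field, Pi.smul_apply]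
  rw [zpow_sub_one₀ hc.ne', mul_comm, mul_smul, ← hchain, inv_smul_smul₀ hc.ne']

protected theorem iteratedFDeriv {U : E → W} (hU : IsPosHomogeneous d U) (N : ℕ) :
    IsPosHomogeneous (d - N) (iteratedFDeriv ℝ N U) := by
  induction N with
  | zero =>
    intro c hc y
    ext m
    simp [hU hc y]
  | succ N ih =>
    intro c hc y
    have hstep := ih.fderiv hc y
    rw [iteratedFDeriv_succ_eq_comp_left, Function.comp_apply, Function.comp_apply, hstep,
      map_smul, Nat.cast_succ, sub_add_eq_sub_sub]

protected theorem leftInverseAlong {A : E → X →L[ℝ] Y} {B : E → Y →L[ℝ] X}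
    (hA : IsPosHomogeneous a A) (hB : IsPosHomogeneous b B) :
    IsPosHomogeneous (-a) (fun y => leftInverseAlong (A y) (B y)) := by
  have hdeg : -a = -(b + a) + b := by ring
  rw [hdeg]
  exact (hB.clm_comp hA).clm_inverse.clm_comp hB

protected theorem kerProjAlong {A : E → X →L[ℝ] Y} {B : E → Y →L[ℝ] X}
    (hA : IsPosHomogeneous a A) (hB : IsPosHomogeneous b B) :
    IsPosHomogeneous 0 (fun y => kerProjAlong (A y) (B y)) := by
  refine (const _).sub ?_
  rw [← add_neg_cancel a]
  exact hA.clm_comp (hA.leftInverseAlong hB)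

theorem exists_norm_le [ProperSpace E] {U : E → W} (hom : IsPosHomogeneous d U)
    (hU : ContinuousOn U {y | y ≠ 0}) :
    ∃ C : ℝ, 0 ≤ C ∧ ∀ y, y ≠ 0 → ‖U y‖ ≤ C * ‖y‖ ^ d := by
  have hsphere : Metric.sphere (0 : E) 1 ⊆ {y | y ≠ 0} := fun y hy =>
    ne_zero_of_mem_unit_sphere ⟨y, hy⟩
  obtain ⟨C, hC⟩ := (isCompact_sphere (0 : E) 1).exists_bound_of_continuousOn (hU.mono hsphere)
  refine ⟨max C 0, le_max_right _ _, fun y hy => ?_⟩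
  have hpos : 0 < ‖y‖ := norm_pos_iff.mpr hy
  have hunit : ‖y‖⁻¹ • y ∈ Metric.sphere (0 : E) 1 := by
    rw [mem_sphere_zero_iff_norm, norm_smul, norm_inv, norm_norm, inv_mul_cancel₀ hpos.ne']
  calc ‖U y‖ = ‖U (‖y‖ • ‖y‖⁻¹ • y)‖ := by rw [smul_inv_smul₀ hpos.ne']
    _ = ‖U (‖y‖⁻¹ • y)‖ * ‖y‖ ^ d := by
      rw [hom hpos, norm_smul, norm_zpow, norm_norm, mul_comm]
    _ ≤ max C 0 * ‖y‖ ^ d := by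
      gcongr
      exact (hC _ hunit).trans (le_max_left _ _)

theorem exists_norm_iteratedFDeriv_le [ProperSpace E] {U : E → W} (hom : IsPosHomogeneous d U)
    (hU : ContDiffOn ℝ (⊤ : ℕ∞) U {y | y ≠ 0}) (N : ℕ) :
    ∃ C : ℝ, 0 ≤ C ∧ ∀ y, y ≠ 0 → ‖iteratedFDeriv ℝ N U y‖ ≤ C * ‖y‖ ^ (d - N) := by
  refine (hom.iteratedFDeriv N).exists_norm_le ?_
  have hcont := hU.continuousOn_iteratedFDerivWithin (m := N) (by exact_mod_cast le_top)
    isOpen_ne.uniqueDiffOn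
  exact hcont.congr fun y hy => (iteratedFDerivWithin_of_isOpen N isOpen_ne hy).symm

theorem exists_norm_iteratedFDeriv_clm_apply_le [ProperSpace E] {U : E → X →L[ℝ] Y}
    (hom : IsPosHomogeneous d U) (hU : ContDiffOn ℝ (⊤ : ℕ∞) U {y | y ≠ 0})
    {F : E → X} (hF : ContDiff ℝ (⊤ : ℕ∞) F) (N : ℕ) :
    ∃ C : ℝ, ∀ y, y ≠ 0 → ‖y‖ ≤ 1 →
      ‖iteratedFDeriv ℝ N (fun x => U x (F x)) y‖ ≤ C * ‖y‖ ^ (d - N) := by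
  choose B hB0 hB using hom.exists_norm_iteratedFDeriv_le hU
  have hFbounded (j : ℕ) :
      ∃ K : ℝ, ∀ y ∈ Metric.closedBall (0 : E) 1, ‖iteratedFDeriv ℝ j F y‖ ≤ K :=
    (isCompact_closedBall (0 : E) 1).exists_bound_of_continuousOn
      (hF.continuous_iteratedFDeriv (m := j) (by exact_mod_cast le_top)).continuousOn
  choose K hK using hFbounded
  refine ⟨∑ i ∈ Finset.range (N + 1), N.choose i * B i * K (N - i), fun y hy hy1 => ?_⟩
  have hpos : 0 < ‖y‖ := norm_pos_iff.mpr hy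
  have hleibniz := norm_iteratedFDerivWithin_clm_apply hU hF.contDiffOn
    isOpen_ne.uniqueDiffOn hy (n := N) (by exact_mod_cast le_top)
  simp only [iteratedFDerivWithin_of_isOpen _ isOpen_ne hy] at hleibniz
  rw [Finset.sum_mul]
  refine hleibniz.trans (Finset.sum_le_sum fun i hi => ?_)
  have hiN : (i : ℤ) ≤ N := by exact_mod_cast Finset.mem_range_succ_iff.mp hi
  have hUi : ‖iteratedFDeriv ℝ i U y‖ ≤ B i * ‖y‖ ^ (d - N) :=
    (hB i y hy).trans (mul_le_mul_of_nonneg_left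
      (zpow_le_zpow_right_of_le_one₀ hpos hy1 (by lia)) (hB0 i))
  calc _ ≤ N.choose i * (B i * ‖y‖ ^ (d - N)) * K (N - i) := by
        have := hB0 i
        gcongr
        exact hK _ y (mem_closedBall_zero_iff.mpr hy1)
    _ = N.choose i * B i * K (N - i) * ‖y‖ ^ (d - N) := by ring

theorem exists_norm_clm_apply_schwartz_le [ProperSpace E] {U : E → X →L[ℝ] Y}
    (hom : IsPosHomogeneous d U) (hU : ContinuousOn U {y | y ≠ 0}) (F : SchwartzMap E X) (N : ℕ) :
    ∃ C : ℝ, ∀ y, 1 ≤ ‖y‖ → ‖U y (F y)‖ ≤ C * ‖y‖ ^ (-(N : ℤ)) := by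
  obtain ⟨B, hB0, hB⟩ := hom.exists_norm_le hU
  obtain ⟨K, hK0, hK⟩ := F.decay (N + d.toNat) 0
  refine ⟨B * K, fun y hy => ?_⟩
  have hpos : 0 < ‖y‖ := one_pos.trans_le hy
  have hF : ‖F y‖ ≤ K * ‖y‖ ^ (-((N + d.toNat : ℕ) : ℤ)) := by
    rw [zpow_neg, zpow_natCast, ← div_eq_mul_inv, le_div_iff₀' (by positivity)]
    simpa only [norm_iteratedFDeriv_zero] using hK y
  calc ‖U y (F y)‖ ≤ ‖U y‖ * ‖F y‖ := (U y).le_opNorm _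
    _ ≤ B * ‖y‖ ^ d * (K * ‖y‖ ^ (-((N + d.toNat : ℕ) : ℤ))) := by
      gcongr
      exact hB y (norm_pos_iff.mp hpos)
    _ = B * K * ‖y‖ ^ (d - (N + d.toNat : ℕ)) := by
      rw [sub_eq_add_neg, zpow_add₀ hpos.ne']
      ring
    _ ≤ B * K * ‖y‖ ^ (-(N : ℤ)) := by
      gcongr
      lia

end IsPosHomogeneous

end Homogeneous

section Symmetrization

variable {n m p k : ℕ}

theorem symz_comp_perm {α : Type*} [AddCommMonoid α] [Module ℝ α] (T : (Fin m → Fin n) → α)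
    (π : Equiv.Perm (Fin m)) (i : Fin m → Fin n) : symz T (i ∘ π) = symz T i :=
  congrArg ((m.factorial : ℝ)⁻¹ • ·) (Fintype.sum_equiv (Equiv.mulLeft π) _ _ fun _ => rfl)

theorem sum_symz_smul {M : Type*} [AddCommGroup M] [Module ℂ M] (T : (Fin m → Fin n) → ℂ)
    {G : (Fin m → Fin n) → M} (hG : ∀ (π : Equiv.Perm (Fin m)) i, G (i ∘ π) = G i) :
    ∑ i, symz T i • G i = ∑ i, T i • G i := by
  have hperm (π : Equiv.Perm (Fin m)) : ∑ i, T (i ∘ π) • G i = ∑ i, T i • G i := by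
    refine Fintype.sum_equiv (Equiv.arrowCongr π.symm (Equiv.refl _)) _ _ fun i => ?_
    exact congrArg (T (i ∘ π) • ·) (hG π i).symm
  simp only [symz, smul_assoc, Finset.sum_smul]
  rw [← Finset.smul_sum, Finset.sum_comm]
  simp only [hperm, Finset.sum_const, Finset.card_univ, Fintype.card_perm, Fintype.card_fin]
  rw [← Nat.cast_smul_eq_nsmul ℝ, inv_smul_smul₀ (Nat.cast_ne_zero.mpr m.factorial_ne_zero)]

theorem sum_eq_sum_append {M : Type*} [AddCommMonoid M] (H : (Fin (p + k) → Fin n) → M) :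
    ∑ i, H i = ∑ a : Fin p → Fin n, ∑ j : Fin k → Fin n, H (Fin.append a j) := by
  rw [← Fintype.sum_prod_type']
  exact (Fintype.sum_equiv (Fin.appendEquiv p k) _ _ fun _ => rfl).symm

/-- The tensor product `V ⊗ y^{⊗k}`, whose symmetrization is `i_{y^{⊗k}} V`. -/
def tensorMulPow (k : ℕ) (y : En n) (V : (Fin p → Fin n) → ℂ) : (Fin (p + k) → Fin n) → ℂ :=
  fun i => (∏ r : Fin k, (y (i (Fin.natAdd p r)) : ℂ)) * V (fun s => i (Fin.castAdd k s))

theorem iPowTensC_eq_symz (y : En n) (V : (Fin p → Fin n) → ℂ) :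
    iPowTensC (k := k) y V = symz (tensorMulPow k y V) := rfl

theorem isSymTensorC_iPowTensC (y : En n) (V : (Fin p → Fin n) → ℂ) :
    IsSymTensorC (iPowTensC (k := k) y V) :=
  symz_comp_perm _

theorem tensorMulPow_append (y : En n) (V : (Fin p → Fin n) → ℂ) (a : Fin p → Fin n)
    (j : Fin k → Fin n) :
    tensorMulPow k y V (Fin.append a j) = (∏ r, (y (j r) : ℂ)) * V a := by
  simp only [tensorMulPow, Fin.append_right, Fin.append_left]

theorem sum_tensorMulPow_mul_star (y : En n) (V : (Fin p → Fin n) → ℂ)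
    (T : (Fin (p + k) → Fin n) → ℂ) :
    ∑ i, tensorMulPow k y V i * star (T i) = ∑ a, V a * star (jPowTensC y T a) := by
  rw [sum_eq_sum_append]
  refine Finset.sum_congr rfl fun a _ => ?_
  simp only [tensorMulPow_append, jPowTensC, star_sum, Finset.mul_sum, star_mul', star_prod,
    Complex.star_def, Complex.conj_ofReal]
  exact Finset.sum_congr rfl fun j _ => by ring

end Symmetrization

section TensorPolynomial

open MvPolynomial

variable {n m p k : ℕ}

/-- The polynomial `T(ξ) = ∑ T_{i₁…i_m} ξ_{i₁}⋯ξ_{i_m}` of a tensor `T`. It only depends on the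
symmetrization of `T`, and turns symmetric multiplication into multiplication of polynomials. -/
def tensorPoly (T : (Fin m → Fin n) → ℂ) : MvPolynomial (Fin n) ℂ :=
  ∑ i, T i • ∏ r, X (i r)

theorem tensorPoly_symz (T : (Fin m → Fin n) → ℂ) : tensorPoly (symz T) = tensorPoly T :=
  sum_symz_smul T fun π i => Equiv.prod_comp π fun r => X (i r)

theorem tensorPoly_tensorMulPow (y : En n) (V : (Fin p → Fin n) → ℂ) :
    tensorPoly (tensorMulPow k y V) =
      tensorPoly V * (∑ c, (y c : ℂ) • (X c : MvPolynomial (Fin n) ℂ)) ^ k := by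
  rw [tensorPoly, sum_eq_sum_append, tensorPoly, Fintype.sum_pow, Finset.sum_mul_sum]
  refine Finset.sum_congr rfl fun a _ => Finset.sum_congr rfl fun j _ => ?_
  simp only [tensorMulPow_append, Fin.prod_univ_add, Fin.append_left, Fin.append_right,
    smul_eq_C_mul, Finset.prod_mul_distrib, map_mul, map_prod]
  ring

theorem linearForm_ne_zero {y : En n} (hy : y ≠ 0) :
    ∑ c, (y c : ℂ) • (X c : MvPolynomial (Fin n) ℂ) ≠ 0 := by
  refine fun h => hy (PiLp.ext fun c => ?_)
  simpa [coeff_sum, coeff_smul, coeff_X, Finsupp.single_left_inj] using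
    congrArg (coeff (Finsupp.single c 1)) h

theorem exists_perm_of_sum_single_eq {ι σ : Type*} [Fintype ι] {a b : ι → σ}
    (h : ∑ r, Finsupp.single (a r) 1 = (∑ r, Finsupp.single (b r) 1 : σ →₀ ℕ)) :
    ∃ π : Equiv.Perm ι, a = b ∘ π := by
  classical
  have hcard (c : σ) : Fintype.card {r // a r = c} = Fintype.card {r // b r = c} := by
    simpa [Finsupp.finsetSum_apply, Finsupp.single_apply, Fintype.card_subtype] using
      DFunLike.congr_fun h c
  let e (c : σ) : {r // a r = c} ≃ {r // b r = c} := Fintype.equivOfCardEq (hcard c)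
  exact ⟨Equiv.ofFiberEquiv e, funext fun r => (Equiv.ofFiberEquiv_map e r).symm⟩

theorem tensorPoly_eq_sum_monomial (T : (Fin m → Fin n) → ℂ) :
    tensorPoly T = ∑ i, monomial (∑ r, Finsupp.single (i r) 1) (T i) := by
  refine Finset.sum_congr rfl fun i _ => ?_
  rw [monomial_sum_index, smul_eq_C_mul]
  rfl

theorem IsSymTensorC.eq_zero_of_tensorPoly_eq_zero {T : (Fin m → Fin n) → ℂ}
    (hT : IsSymTensorC T) (h : tensorPoly T = 0) : T = 0 := by
  classical
  funext b
  let exponent (i : Fin m → Fin n) : Fin n →₀ ℕ := ∑ r, Finsupp.single (i r) 1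
  have hconst : ∀ i ∈ Finset.univ.filter (exponent · = exponent b), T i = T b := by
    intro i hi
    obtain ⟨π, rfl⟩ := exists_perm_of_sum_single_eq (Finset.mem_filter.mp hi).2
    exact hT π b
  have hcoeff : (Finset.univ.filter (exponent · = exponent b)).card • T b = 0 := by
    rw [← Finset.sum_const, ← Finset.sum_congr rfl hconst, Finset.sum_filter]
    simpa only [tensorPoly_eq_sum_monomial, coeff_sum, coeff_monomial, coeff_zero] using
      congrArg (coeff (exponent b)) h
  refine (smul_eq_zero.mp hcoeff).resolve_left (Finset.card_ne_zero_of_mem (a := b) ?_)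
  exact Finset.mem_filter.mpr ⟨Finset.mem_univ b, rfl⟩

theorem IsSymTensorC.eq_zero_of_iPowTensC_eq_zero {V : (Fin p → Fin n) → ℂ}
    (hV : IsSymTensorC V) {y : En n} (hy : y ≠ 0) (h : iPowTensC (k := k) y V = 0) : V = 0 := by
  refine hV.eq_zero_of_tensorPoly_eq_zero ?_
  have hprod : tensorPoly V * (∑ c, (y c : ℂ) • (X c : MvPolynomial (Fin n) ℂ)) ^ k = 0 := by
    rw [← tensorPoly_tensorMulPow, ← tensorPoly_symz, ← iPowTensC_eq_symz, h]
    simp only [tensorPoly, Pi.zero_apply, zero_smul, Finset.sum_const_zero]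
  exact (mul_eq_zero.mp hprod).resolve_right (pow_ne_zero k (linearForm_ne_zero hy))

end TensorPolynomial

section SymmetricOperators

variable {n m p k : ℕ}

/-- The real vector space `S^m(ℝⁿ) ⊗ ℂ` of complex symmetric tensors. -/
def symTensors (n m : ℕ) : Submodule ℝ ((Fin m → Fin n) → ℂ) where
  carrier := {T | IsSymTensorC T}
  add_mem' hS hT π i := congrArg₂ (· + ·) (hS π i) (hT π i)
  zero_mem' _ _ := rfl
  smul_mem' c _ hT π i := congrArg (c • ·) (hT π i)

theorem isLinearMap_symz :
    IsLinearMap ℝ (symz : ((Fin m → Fin n) → ℂ) → (Fin m → Fin n) → ℂ) where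
  map_add S T := by
    funext i
    simp only [symz, Pi.add_apply, Finset.sum_add_distrib, smul_add]
  map_smul c T := by
    funext i
    simp only [symz, Pi.smul_apply, ← Finset.smul_sum, smul_comm c]

theorem isLinearMap_iPowTensC (y : En n) :
    IsLinearMap ℝ (iPowTensC (m := p) (k := k) y) where
  map_add V W := by
    have h : tensorMulPow k y (V + W) = tensorMulPow k y V + tensorMulPow k y W :=
      funext fun i => mul_add _ _ _
    simp only [iPowTensC_eq_symz, h, isLinearMap_symz.map_add]
  map_smul c V := by
    have h : tensorMulPow k y (c • V) = c • tensorMulPow k y V :=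
      funext fun i => mul_smul_comm c _ _
    simp only [iPowTensC_eq_symz, h, isLinearMap_symz.map_smul]

theorem isLinearMap_jPowTensC (y : En n) :
    IsLinearMap ℝ (jPowTensC (m := p) (k := k) y) where
  map_add S T := by
    funext i
    simp only [jPowTensC, Pi.add_apply, mul_add, Finset.sum_add_distrib]
  map_smul c T := by
    funext i
    simp only [jPowTensC, Pi.smul_apply, mul_smul_comm, ← Finset.smul_sum]

/-- Symmetrization as a projection onto the symmetric tensors. -/
def symProj (n m : ℕ) : ((Fin m → Fin n) → ℂ) →L[ℝ] symTensors n m :=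
  (isLinearMap_symz.mk'.codRestrict (symTensors n m) symz_comp_perm).toContinuousLinearMap

/-- Symmetric multiplication `i_{y^{⊗k}}` as an operator on symmetric tensors. Its values are
regarded as arbitrary tensors, since the fields to be decomposed need not be symmetric. -/
def iPowSym (p k : ℕ) (y : En n) : symTensors n p →L[ℝ] ((Fin (p + k) → Fin n) → ℂ) :=
  (isLinearMap_iPowTensC y).mk'.toContinuousLinearMap ∘L (symTensors n p).subtypeL

/-- The symmetrized contraction `σ j_{y^{⊗k}}`, adjoint to `iPowSym` on symmetric tensors. -/
def jPowSym (p k : ℕ) (y : En n) : ((Fin (p + k) → Fin n) → ℂ) →L[ℝ] symTensors n p :=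
  symProj n p ∘L (isLinearMap_jPowTensC y).mk'.toContinuousLinearMap

end SymmetricOperators

section SymmetricOperatorFamilies

variable {n : ℕ} (p k : ℕ)

theorem iPowSym_smul (c : ℝ) (y : En n) : iPowSym p k (c • y) = c ^ k • iPowSym p k y := by
  ext V : 1
  have h : tensorMulPow k (c • y) (V : (Fin p → Fin n) → ℂ) = c ^ k • tensorMulPow k y V := by
    funext i
    simp only [tensorMulPow, PiLp.smul_apply, smul_eq_mul, Complex.ofReal_mul, Pi.smul_apply,
      Finset.prod_mul_distrib, Finset.prod_const, Finset.card_univ, Fintype.card_fin,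
      Complex.real_smul, Complex.ofReal_pow, mul_assoc]
  exact (congrArg symz h).trans (isLinearMap_symz.map_smul _ _)

theorem jPowSym_smul (c : ℝ) (y : En n) : jPowSym p k (c • y) = c ^ k • jPowSym p k y := by
  ext T : 1
  have h : jPowTensC (c • y) T = c ^ k • jPowTensC y T := by
    funext i
    simp only [jPowTensC, PiLp.smul_apply, smul_eq_mul, Complex.ofReal_mul, Pi.smul_apply,
      Finset.prod_mul_distrib, Finset.prod_const, Finset.card_univ, Fintype.card_fin,
      Complex.real_smul, Complex.ofReal_pow, mul_assoc, Finset.mul_sum]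
  exact (congrArg (symProj n p) h).trans (map_smul _ _ _)

theorem isPosHomogeneous_iPowSym : IsPosHomogeneous k (iPowSym (n := n) p k) := fun c _ y => by
  rw [iPowSym_smul, zpow_natCast]

theorem isPosHomogeneous_jPowSym : IsPosHomogeneous k (jPowSym (n := n) p k) := fun c _ y => by
  rw [jPowSym_smul, zpow_natCast]

theorem contDiff_ofReal_coord (c : Fin n) : ContDiff ℝ (⊤ : ℕ∞) fun y : En n => (y c : ℂ) :=
  (Complex.ofRealCLM ∘L EuclideanSpace.proj c).contDiff

theorem contDiff_iPowSym : ContDiff ℝ (⊤ : ℕ∞) (iPowSym (n := n) p k) := by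
  refine contDiff_clm_apply_iff.mpr fun V => contDiff_pi.mpr fun i => ?_
  exact contDiff_const.smul (ContDiff.sum fun π _ =>
    (contDiff_prod fun r _ => contDiff_ofReal_coord _).mul contDiff_const)

theorem contDiff_jPowSym : ContDiff ℝ (⊤ : ℕ∞) (jPowSym (n := n) p k) := by
  refine contDiff_const.clm_comp (contDiff_clm_apply_iff.mpr fun T => contDiff_pi.mpr fun i => ?_)
  exact ContDiff.sum fun j _ => (contDiff_prod fun r _ => contDiff_ofReal_coord _).mul
    contDiff_const

variable {p k}

theorem sum_iPowTensC_mul_star {V : (Fin p → Fin n) → ℂ} (hV : IsSymTensorC V) (y : En n)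
    {T : (Fin (p + k) → Fin n) → ℂ} (hT : IsSymTensorC T) :
    ∑ i, iPowTensC y V i * star (T i) = ∑ a, V a * star (symz (jPowTensC y T) a) := by
  calc ∑ i, iPowTensC y V i * star (T i) = ∑ i, tensorMulPow k y V i * star (T i) :=
        sum_symz_smul _ fun π i => congrArg star (hT π i)
    _ = ∑ a, V a * star (jPowTensC y T a) := sum_tensorMulPow_mul_star y V T
    _ = star (∑ a, jPowTensC y T a • star (V a)) := by
      simp only [star_sum, smul_eq_mul, star_mul, star_star]
    _ = star (∑ a, symz (jPowTensC y T) a • star (V a)) := by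
      rw [sum_symz_smul (G := fun a => star (V a)) _ fun π a => congrArg star (hV π a)]
    _ = ∑ a, V a * star (symz (jPowTensC y T) a) := by
      simp only [star_sum, smul_eq_mul, star_mul, star_star]

theorem iPowSym_apply (y : En n) (V : symTensors n p) : 
    iPowSym p k y V = iPowTensC y (V : (Fin p → Fin n) → ℂ) := rfl

theorem coe_jPowSym_apply (y : En n) (T : (Fin (p + k) → Fin n) → ℂ) :
    (jPowSym p k y T : (Fin p → Fin n) → ℂ) = symz (jPowTensC y T) := rfl

theorem jPowSym_of_jPowTensC_eq_zero {y : En n} {T : (Fin (p + k) → Fin n) → ℂ}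
    (hT : jPowTensC y T = 0) : jPowSym p k y T = 0 :=
  (congrArg (symProj n p) hT).trans (map_zero _)

open scoped ComplexOrder in
theorem isInvertible_jPowSym_comp_iPowSym {y : En n} (hy : y ≠ 0) :
    (jPowSym p k y ∘L iPowSym p k y).IsInvertible := by
  refine isInvertible_of_injective ((injective_iff_map_eq_zero _).mpr ?_)
  rintro ⟨V, hV⟩ h
  have hjV : symz (jPowTensC y (iPowTensC (k := k) y V)) = 0 := by
    simpa only [ContinuousLinearMap.comp_apply, coe_jPowSym_apply, iPowSym_apply,
      Submodule.coe_zero] using congrArg Subtype.val h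
  have hnorm : iPowTensC (k := k) y V ⬝ᵥ star (iPowTensC y V) = 0 := by
    refine (sum_iPowTensC_mul_star hV y (isSymTensorC_iPowTensC y V)).trans ?_
    simp only [hjV, Pi.zero_apply, star_zero, mul_zero, Finset.sum_const_zero]
  have hiV : iPowTensC (k := k) y V = 0 := dotProduct_self_star_eq_zero.mp hnorm
  exact Subtype.ext (hV.eq_zero_of_iPowTensC_eq_zero hy hiV)

end SymmetricOperatorFamilies

section DecompositionMultipliers

variable {n p k : ℕ}

/-- The multiplier sending `f̂(y)` to the potential part `v̂(y)`; a junk value at `y = 0`. -/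
def potentialMultiplier (p k : ℕ) (y : En n) :
    ((Fin (p + k) → Fin n) → ℂ) →L[ℝ] ((Fin p → Fin n) → ℂ) :=
  (symTensors n p).subtypeL ∘L leftInverseAlong (iPowSym p k y) (jPowSym p k y)

/-- The multiplier sending `f̂(y)` to the part `ĝ(y)` annihilated by `j_{y^{⊗k}}`; a junk value at
`y = 0`. -/
def solenoidalMultiplier (p k : ℕ) (y : En n) :
    ((Fin (p + k) → Fin n) → ℂ) →L[ℝ] ((Fin (p + k) → Fin n) → ℂ) :=
  kerProjAlong (iPowSym p k y) (jPowSym p k y)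

theorem potentialMultiplier_apply_add {y : En n} (hy : y ≠ 0) {T : (Fin (p + k) → Fin n) → ℂ}
    (hT : jPowTensC y T = 0) {V : (Fin p → Fin n) → ℂ} (hV : IsSymTensorC V) :
    potentialMultiplier p k y (T + iPowTensC y V) = V :=
  congrArg Subtype.val (leftInverseAlong_apply_add (isInvertible_jPowSym_comp_iPowSym hy)
    (jPowSym_of_jPowTensC_eq_zero hT) ⟨V, hV⟩)

theorem solenoidalMultiplier_apply_add {y : En n} (hy : y ≠ 0) {T : (Fin (p + k) → Fin n) → ℂ}
    (hT : jPowTensC y T = 0) {V : (Fin p → Fin n) → ℂ} (hV : IsSymTensorC V) :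
    solenoidalMultiplier p k y (T + iPowTensC y V) = T :=
  kerProjAlong_apply_add (isInvertible_jPowSym_comp_iPowSym hy)
    (jPowSym_of_jPowTensC_eq_zero hT) ⟨V, hV⟩

variable (n p k)

theorem isPosHomogeneous_potentialMultiplier :
    IsPosHomogeneous (-k) (potentialMultiplier (n := n) p k) := by
  rw [← zero_add (-(k : ℤ))]
  exact (IsPosHomogeneous.const _).clm_comp
    ((isPosHomogeneous_iPowSym p k).leftInverseAlong (isPosHomogeneous_jPowSym p k))

theorem isPosHomogeneous_solenoidalMultiplier :
    IsPosHomogeneous 0 (solenoidalMultiplier (n := n) p k) :=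
  (isPosHomogeneous_iPowSym p k).kerProjAlong (isPosHomogeneous_jPowSym p k)

theorem contDiffOn_potentialMultiplier :
    ContDiffOn ℝ (⊤ : ℕ∞) (potentialMultiplier (n := n) p k) {y | y ≠ 0} :=
  contDiffOn_const.clm_comp (contDiffOn_leftInverseAlong (contDiff_iPowSym p k).contDiffOn
    (contDiff_jPowSym p k).contDiffOn fun _ => isInvertible_jPowSym_comp_iPowSym)

theorem contDiffOn_solenoidalMultiplier :
    ContDiffOn ℝ (⊤ : ℕ∞) (solenoidalMultiplier (n := n) p k) {y | y ≠ 0} :=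
  contDiffOn_kerProjAlong (contDiff_iPowSym p k).contDiffOn (contDiff_jPowSym p k).contDiffOn
    fun _ => isInvertible_jPowSym_comp_iPowSym

end DecompositionMultipliers

section Derivatives

variable {n m : ℕ}

theorem DopList_eq_iteratedFDeriv {l : List (Fin n)} {u : En n → ℂ} {y : En n}
    (hu : ContDiffAt ℝ l.length u y) :
    DopList l u y = (-Complex.I) ^ l.length *
      iteratedFDeriv ℝ l.length u y fun r => EuclideanSpace.single (l.get r) 1 := by
  induction l generalizing y with
  | nil => simp [DopList]
  | cons j l ih =>
    have hlt : (l.length : WithTop ℕ∞) < (l.length + 1 : ℕ) := by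
      exact_mod_cast l.length.lt_succ_self
    have hev : DopList l u =ᶠ[nhds y] fun x => (-Complex.I) ^ l.length *
        iteratedFDeriv ℝ l.length u x fun r => EuclideanSpace.single (l.get r) 1 :=
      (hu.eventually (by simp)).mono fun x hx => ih (hx.of_le hlt.le)
    have hdiff : DifferentiableAt ℝ (iteratedFDeriv ℝ l.length u) y :=
      hu.differentiableAt_iteratedFDeriv hlt
    change -Complex.I * fderiv ℝ (DopList l u) y (EuclideanSpace.single j 1) = _
    rw [hev.fderiv_eq, fderiv_const_mul (hdiff.continuousMultilinear_apply_const _)]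
    have hsucc : iteratedFDeriv ℝ (j :: l).length u y
          (fun r => EuclideanSpace.single ((j :: l).get r) 1) =
        fderiv ℝ (fun x => iteratedFDeriv ℝ l.length u x fun r =>
          EuclideanSpace.single (l.get r) 1) y (EuclideanSpace.single j 1) :=
      hdiff.iteratedFDeriv_succ_apply_left'
    rw [hsucc, smul_apply, smul_eq_mul, List.length_cons, pow_succ', mul_assoc]

theorem norm_DopList_le {l : List (Fin n)} {u : En n → ℂ} {y : En n}
    (hu : ContDiffAt ℝ l.length u y) :
    ‖DopList l u y‖ ≤ ‖iteratedFDeriv ℝ l.length u y‖ := by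
  rw [DopList_eq_iteratedFDeriv hu, norm_mul, norm_pow, norm_neg, Complex.norm_I, one_pow, one_mul]
  refine (ContinuousMultilinearMap.le_opNorm _ _).trans_eq ?_
  simp only [PiLp.norm_single, norm_one, Finset.prod_const_one, mul_one]

theorem length_mIdxList (α : Fin n → ℕ) : (mIdxList α).length = ∑ r, α r := by
  simp [mIdxList, List.length_flatMap, Fin.sum_univ_def]

theorem tensNormC_le (T : (Fin m → Fin n) → ℂ) :
    tensNormC T ≤ √(Fintype.card (Fin m → Fin n)) * ‖T‖ := by
  refine Real.sqrt_le_iff.mpr ⟨by positivity, ?_⟩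
  rw [mul_pow, Real.sq_sqrt (Nat.cast_nonneg _), ← nsmul_eq_mul, ← Finset.card_univ,
    ← Finset.sum_const]
  gcongr with i
  exact norm_le_pi_norm T i

theorem tensNormC_Dpow_le (α : Fin n → ℕ) {u : (Fin m → Fin n) → En n → ℂ} {y : En n}
    (hu : ContDiffAt ℝ (∑ r, α r : ℕ) (fun x i => u i x) y) :
    tensNormC (fun i => Dpow α (u i) y) ≤ √(Fintype.card (Fin m → Fin n)) *
      ‖iteratedFDeriv ℝ (∑ r, α r) (fun x i => u i x) y‖ := by
  refine (tensNormC_le _).trans (mul_le_mul_of_nonneg_left ?_ (Real.sqrt_nonneg _))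
  refine (pi_norm_le_iff_of_nonneg (norm_nonneg _)).mpr fun i => ?_
  rw [← length_mIdxList α] at hu ⊢
  refine (norm_DopList_le (contDiffAt_pi.mp hu i)).trans ?_
  refine ((ContinuousLinearMap.proj (R := ℝ) (φ := fun _ : Fin m → Fin n => ℂ)
    i).norm_iteratedFDeriv_comp_left hu le_rfl).trans ?_
  refine mul_le_of_le_one_left (norm_nonneg _)
    (ContinuousLinearMap.opNorm_le_bound _ zero_le_one fun T => ?_)
  exact (norm_le_pi_norm T i).trans_eq (one_mul _).symm

end Derivatives

section Fourier

variable {n m : ℕ}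

theorem exists_schwartzMap_eq_ftr (φ : SchwartzMap (En n) ℝ) :
    ∃ ψ : SchwartzMap (En n) ℂ, ⇑ψ = ftr φ := by
  let φC : SchwartzMap (En n) ℂ := SchwartzMap.postcompCLM (𝕜 := ℝ) Complex.ofRealCLM φ
  let rescale : En n ≃L[ℝ] En n :=
    ContinuousLinearEquiv.smulLeft (Units.mk0 (2 * Real.pi)⁻¹ (by positivity))
  refine ⟨(((2 * Real.pi) ^ (-(n : ℝ) / 2) : ℝ) : ℂ) •
    SchwartzMap.compCLMOfContinuousLinearEquiv ℂ rescale (FourierTransform.fourier φC), ?_⟩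
  funext y
  have hrescale : rescale y = (2 * Real.pi)⁻¹ • y := rfl
  simp only [smul_apply, SchwartzMap.compCLMOfContinuousLinearEquiv_apply,
    Function.comp_apply, smul_eq_mul, ftr, SchwartzMap.fourier_coe, Real.fourier_eq', hrescale]
  congr 2
  funext x
  have hpi : (Real.pi : ℂ) ≠ 0 := by exact_mod_cast Real.pi_ne_zero
  have hphase : ((-2 * Real.pi * ⟪x, (2 * Real.pi)⁻¹ • y⟫ : ℝ) : ℂ) * Complex.I =
      -Complex.I * (⟪x, y⟫ : ℝ) := by
    rw [inner_smul_right]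
    push_cast
    field_simp
  rw [hphase]
  rfl

theorem IsSchwartzField.exists_schwartzMap_eq_ftr {f : (Fin m → Fin n) → En n → ℝ}
    (hf : IsSchwartzField f) :
    ∃ F : SchwartzMap (En n) ((Fin m → Fin n) → ℂ), ∀ y i, F y i = ftr (f i) y := by
  classical
  choose φ hφ using hf
  choose ψ hψ using fun i => _root_.exists_schwartzMap_eq_ftr (φ i)
  refine ⟨∑ i, SchwartzMap.postcompCLM (𝕜 := ℝ)
    (ContinuousLinearMap.single ℝ (fun _ : Fin m → Fin n => ℂ) i) (ψ i), fun y i => ?_⟩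
  rw [← hφ i, ← hψ i]
  simp [Finset.sum_apply, Pi.single_apply]

end Fourier

section MultiplierEstimates

variable {n m : ℕ} {X : Type*} [NormedAddCommGroup X] [NormedSpace ℝ X] {d : ℤ}
  {U : En n → X →L[ℝ] ((Fin m → Fin n) → ℂ)} {u : (Fin m → Fin n) → En n → ℂ}

theorem contDiffOn_of_eq_clm_apply (hU : ContDiffOn ℝ (⊤ : ℕ∞) U {y | y ≠ 0})
    {F : En n → X} (hF : ContDiff ℝ (⊤ : ℕ∞) F)
    (hu : ∀ y, y ≠ 0 → (fun i => u i y) = U y (F y)) :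
    ContDiffOn ℝ (⊤ : ℕ∞) (fun y i => u i y) {y | y ≠ 0} :=
  (hU.clm_apply hF.contDiffOn).congr hu

theorem exists_tensNormC_le_rpow_neg (hom : IsPosHomogeneous d U)
    (hU : ContinuousOn U {y | y ≠ 0}) (F : SchwartzMap (En n) X)
    (hu : ∀ y, y ≠ 0 → (fun i => u i y) = U y (F y)) (N : ℕ) :
    ∃ C : ℝ, ∀ y, 1 ≤ ‖y‖ → tensNormC (fun i => u i y) ≤ C * ‖y‖ ^ (-(N : ℝ)) := by
  obtain ⟨C, hC⟩ := hom.exists_norm_clm_apply_schwartz_le hU F N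
  refine ⟨√(Fintype.card (Fin m → Fin n)) * C, fun y hy => ?_⟩
  rw [hu y (norm_pos_iff.mp (one_pos.trans_le hy)), mul_assoc]
  refine (tensNormC_le _).trans (mul_le_mul_of_nonneg_left ?_ (Real.sqrt_nonneg _))
  exact_mod_cast hC y hy

theorem exists_tensNormC_Dpow_le (hom : IsPosHomogeneous d U)
    (hU : ContDiffOn ℝ (⊤ : ℕ∞) U {y | y ≠ 0}) {F : En n → X}
    (hF : ContDiff ℝ (⊤ : ℕ∞) F) (hu : ∀ y, y ≠ 0 → (fun i => u i y) = U y (F y))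
    (α : Fin n → ℕ) :
    ∃ C : ℝ, ∀ y, y ≠ 0 → ‖y‖ ≤ 1 →
      tensNormC (fun i => Dpow α (u i) y) ≤ C * ‖y‖ ^ (-((∑ r, α r : ℕ) : ℝ) + d) := by
  obtain ⟨C, hC⟩ := hom.exists_norm_iteratedFDeriv_clm_apply_le hU hF (∑ r, α r)
  refine ⟨√(Fintype.card (Fin m → Fin n)) * C, fun y hy hy1 => ?_⟩
  have hnhds : {y : En n | y ≠ 0} ∈ nhds y := isOpen_ne.mem_nhds hy
  have hsmooth : ContDiffAt ℝ (∑ r, α r : ℕ) (fun x i => u i x) y :=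
    ((contDiffOn_of_eq_clm_apply hU hF hu).contDiffAt hnhds).of_le (by exact_mod_cast le_top)
  have hcongr : (fun x i => u i x) =ᶠ[nhds y] fun x => U x (F x) := eventually_of_mem hnhds hu
  refine (tensNormC_Dpow_le α hsmooth).trans ?_
  rw [(hcongr.iteratedFDeriv ℝ _).eq_of_nhds, mul_assoc]
  refine mul_le_mul_of_nonneg_left ?_ (Real.sqrt_nonneg _)
  rw [neg_add_eq_sub]
  exact_mod_cast hC y hy hy1

end MultiplierEstimates

theorem fourier_decomposition_estimates_general
    {n p k : ℕ} (F : SchwartzMap (En n) ((Fin (p + k) → Fin n) → ℂ))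
    {gh : (Fin (p + k) → Fin n) → En n → ℂ} {vh : (Fin p → Fin n) → En n → ℂ}
    (hdec : ∀ y : En n, y ≠ 0 →
      F y = (fun i => gh i y) + iPowTensC y (fun j => vh j y) ∧
      jPowTensC (m := p) (k := k) y (fun i => gh i y) = 0 ∧ IsSymTensorC (fun j => vh j y)) :
    (∀ i, ContDiffOn ℝ (⊤ : ℕ∞) (gh i) {y : En n | y ≠ 0}) ∧
    (∀ j, ContDiffOn ℝ (⊤ : ℕ∞) (vh j) {y : En n | y ≠ 0}) ∧
    (∀ N : ℕ, ∃ C : ℝ, ∀ y : En n, 1 ≤ ‖y‖ →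
      tensNormC (fun i => gh i y) ≤ C * ‖y‖ ^ (-(N : ℝ)) ∧
      tensNormC (fun j => vh j y) ≤ C * ‖y‖ ^ (-(N : ℝ))) ∧
    (∀ α : Fin n → ℕ, ∃ C : ℝ, ∀ y : En n, y ≠ 0 → ‖y‖ ≤ 1 →
      tensNormC (fun i => Dpow α (gh i) y) ≤ C * ‖y‖ ^ (-((∑ r, α r : ℕ) : ℝ)) ∧
      tensNormC (fun j => Dpow α (vh j) y)
        ≤ C * ‖y‖ ^ (-((∑ r, α r : ℕ) : ℝ) - k)) := by
  have hg : ∀ y, y ≠ 0 → (fun i => gh i y) = solenoidalMultiplier p k y (F y) := fun y hy => by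
    obtain ⟨hF, hgh, hvh⟩ := hdec y hy
    rw [hF, solenoidalMultiplier_apply_add hy hgh hvh]
  have hv : ∀ y, y ≠ 0 → (fun j => vh j y) = potentialMultiplier p k y (F y) := fun y hy => by
    obtain ⟨hF, hgh, hvh⟩ := hdec y hy
    rw [hF, potentialMultiplier_apply_add hy hgh hvh]
  have homG := isPosHomogeneous_solenoidalMultiplier n p k
  have homV := isPosHomogeneous_potentialMultiplier n p k
  have smoothG := contDiffOn_solenoidalMultiplier n p k
  have smoothV := contDiffOn_potentialMultiplier n p k
  refine ⟨contDiffOn_pi.mp (contDiffOn_of_eq_clm_apply smoothG (F.smooth _) hg),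
    contDiffOn_pi.mp (contDiffOn_of_eq_clm_apply smoothV (F.smooth _) hv), fun N => ?_, fun α => ?_⟩
  · obtain ⟨A, hA⟩ := exists_tensNormC_le_rpow_neg homG smoothG.continuousOn F hg N
    obtain ⟨B, hB⟩ := exists_tensNormC_le_rpow_neg homV smoothV.continuousOn F hv N
    refine ⟨max A B, fun y hy => ⟨(hA y hy).trans ?_, (hB y hy).trans ?_⟩⟩ <;> gcongr
    exacts [le_max_left A B, le_max_right A B]
  · obtain ⟨A, hA⟩ := exists_tensNormC_Dpow_le homG smoothG (F.smooth _) hg α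
    obtain ⟨B, hB⟩ := exists_tensNormC_Dpow_le homV smoothV (F.smooth _) hv α
    simp only [Int.cast_zero, add_zero] at hA
    simp only [Int.cast_neg, Int.cast_natCast, ← sub_eq_add_neg] at hB
    refine ⟨max A B, fun y hy hy1 => ⟨(hA y hy hy1).trans ?_, (hB y hy hy1).trans ?_⟩⟩ <;> gcongr
    exacts [le_max_left A B, le_max_right A B]

/-- smoothness, rapid decay, and near-origin estimates for the
Fourier side pointwise decomposition `f̂(y) = ĝ(y) + i_{y^{⊗k}} v̂(y)`,
`j_{y^{⊗k}} ĝ(y) = 0`.  The rank is `m = p + k` (so `k ≤ m`), and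
`1 ≤ k ≤ n − 1` is expressed as `1 ≤ k` and `k + 1 ≤ n`. -/
theorem fourier_decomposition_estimates
    (n p k : ℕ) (hk1 : 1 ≤ k) (hkn : k + 1 ≤ n)
    (f : (Fin (p + k) → Fin n) → En n → ℝ)
    (hf : IsSchwartzField f) (hfsym : IsSymField f)
    (gh : (Fin (p + k) → Fin n) → En n → ℂ) (vh : (Fin p → Fin n) → En n → ℂ)
    (hdec : ∀ y : En n, y ≠ 0 →
      (∀ i, ftr (f i) y = gh i y + iPowTensC (m := p) (k := k) y (fun j => vh j y) i) ∧
      (∀ i, jPowTensC (m := p) (k := k) y (fun j => gh j y) i = 0) ∧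
      IsSymTensorC (fun i => gh i y) ∧ IsSymTensorC (fun j => vh j y)) :
    (∀ i, ContDiffOn ℝ (⊤ : ℕ∞) (gh i) {y : En n | y ≠ 0}) ∧
    (∀ j, ContDiffOn ℝ (⊤ : ℕ∞) (vh j) {y : En n | y ≠ 0}) ∧
    (∀ N : ℕ, ∃ C : ℝ, ∀ y : En n, 1 ≤ ‖y‖ →
      tensNormC (fun i => gh i y) ≤ C * ‖y‖ ^ (-(N : ℝ)) ∧
      tensNormC (fun j => vh j y) ≤ C * ‖y‖ ^ (-(N : ℝ))) ∧
    (∀ α : Fin n → ℕ, ∃ C : ℝ, ∀ y : En n, y ≠ 0 → ‖y‖ ≤ 1 →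
      tensNormC (fun i => Dpow α (gh i) y) ≤ C * ‖y‖ ^ (-((∑ r, α r : ℕ) : ℝ)) ∧
      tensNormC (fun j => Dpow α (vh j) y)
        ≤ C * ‖y‖ ^ (-((∑ r, α r : ℕ) : ℝ) - k)) := by
  obtain ⟨F, hF⟩ := hf.exists_schwartzMap_eq_ftr
  exact fourier_decomposition_estimates_general F fun y hy => ⟨funext fun i =>
    (hF y i).trans ((hdec y hy).1 i), funext (hdec y hy).2.1, (hdec y hy).2.2.2⟩
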